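/- arXiv:2010.03727 — 2 statements merged into one kernel-verified Lean document; each statement's English description precedes it below -/
import Mathlib

section
/- For every real z with 0 ≤ z ≤ 1 one has √z · ∑_{n=0}^∞ ((1/2)ₙ)³/((3/2)ₙ)² · (−z)ⁿ/n! = Li₂(−√z − √(z+1)) − Li₂(1 − √z − √(z+1)) − (1/2)·log²(√z + √(z+1)) + log(√z + √(z+1) + 1)·log(√z + √(z+1)) + π²/12. -/
noncomputable def poch (a : ℝ) (n : ℕ) : ℝ := ∏ i ∈ Finset.range n, (a + i)

/-- Dilogarithm via its integral representation, valid for all real `x ≤ 1`. -/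
noncomputable def Li2 (x : ℝ) : ℝ := -∫ t in (0:ℝ)..x, Real.log (1 - t) / t

noncomputable section

open Real Set

theorem hasDerivAt_tsum_mul_pow_succ_div {k : ℕ → ℕ} (hk : ∀ n, n ≤ k n) {d : ℕ → ℝ}
    (hd : ∀ n, |d n| ≤ 1) {x : ℝ} (hx : |x| < 1) :
    HasDerivAt (fun y => ∑' n, d n * (y ^ (k n + 1) / (k n + 1))) (∑' n, d n * x ^ k n) x := by
  obtain ⟨r, hxr, hr1⟩ := exists_between hx
  have hr0 : 0 ≤ r := (abs_nonneg x).trans hxr.le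
  refine hasDerivAt_tsum_of_isPreconnected (u := fun n => r ^ n) (t := Ioo (-r) r) (y₀ := 0)
    (g' := fun n y => d n * y ^ k n)
    (summable_geometric_of_lt_one hr0 hr1) isOpen_Ioo isPreconnected_Ioo ?_ ?_ ?_ ?_ (abs_lt.1 hxr)
  · intro n y _
    have h := ((hasDerivAt_pow (k n + 1) y).div_const ((k n : ℝ) + 1)).const_mul (d n)
    refine h.congr_deriv ?_
    have : (k n : ℝ) + 1 ≠ 0 := by positivity
    push_cast
    rw [mul_div_cancel_left₀ _ this]
  · intro n y hy
    have hyr : |y| ≤ r := (abs_lt.2 hy).le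
    rw [norm_mul, norm_pow, Real.norm_eq_abs, Real.norm_eq_abs]
    calc |d n| * |y| ^ k n ≤ 1 * |y| ^ k n := by gcongr; exact hd n
      _ = |y| ^ k n := one_mul _
      _ ≤ |y| ^ n := pow_le_pow_of_le_one (abs_nonneg y) (hyr.trans hr1.le) (hk n)
      _ ≤ r ^ n := by gcongr
  · have := (abs_nonneg x).trans_lt hxr
    constructor <;> linarith
  · simp

theorem eq_of_hasDerivAt_Ioo_eq {f g f' : ℝ → ℝ} {a b : ℝ} (hab : a ≤ b)
    (hf : ContinuousOn f (Icc a b)) (hg : ContinuousOn g (Icc a b))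
    (hf' : ∀ x ∈ Ioo a b, HasDerivAt f (f' x) x) (hg' : ∀ x ∈ Ioo a b, HasDerivAt g (f' x) x) :
    f b - f a = g b - g a := by
  rcases hab.eq_or_lt with rfl | hab
  · simp
  obtain ⟨c, _, hc⟩ := exists_hasDerivAt_eq_slope (fun x => f x - g x) (fun _ => 0) hab
    (hf.sub hg) (fun x hx => by
      simpa only [sub_self] using! (hf' x hx).sub (hg' x hx))
  have := sub_ne_zero.2 hab.ne'
  field_simp at hc
  linarith

theorem Li2_eq_neg_integral_dslope (x : ℝ) :
    Li2 x = -∫ t in (0 : ℝ)..x, dslope (fun t => log (1 - t)) 0 t := by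
  unfold Li2
  congr 1
  apply intervalIntegral.integral_congr_ae
  filter_upwards [MeasureTheory.Measure.ae_ne MeasureTheory.volume 0] with t ht _
  rw [dslope_of_ne _ ht]
  simp [slope, div_eq_inv_mul]

theorem hasDerivAt_Li2_dslope {x : ℝ} (hx : x < 1) :
    HasDerivAt Li2 (-dslope (fun t => log (1 - t)) 0 x) x := by
  have hc : ContinuousOn (dslope (fun t => log (1 - t)) 0) (Iio 1) := by
    rw [continuousOn_dslope (Iio_mem_nhds one_pos)]
    refine ⟨fun t ht => ?_, ?_⟩
    · exact ((continuousAt_const.sub continuousAt_id).log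
        (sub_ne_zero.2 (ne_of_gt ht))).continuousWithinAt
    · exact ((differentiableAt_const _).sub differentiableAt_id).log (by norm_num)
  have hsub : uIcc 0 x ⊆ Iio 1 := fun t ht => by
    rw [mem_uIcc] at ht
    rw [mem_Iio]
    rcases ht with ht | ht <;> linarith
  have h := intervalIntegral.integral_hasDerivAt_right
    ((hc.mono hsub).intervalIntegrable)
    (hc.stronglyMeasurableAtFilter isOpen_Iio x hx) (hc.continuousAt (Iio_mem_nhds hx))
  rw [funext Li2_eq_neg_integral_dslope]
  exact h.neg

theorem hasDerivAt_Li2 {x : ℝ} (hx : x < 1) (hx0 : x ≠ 0) :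
    HasDerivAt Li2 (-log (1 - x) / x) x := by
  convert hasDerivAt_Li2_dslope hx using 1
  rw [dslope_of_ne _ hx0]
  simp [slope, div_eq_inv_mul]

theorem Li2_zero : Li2 0 = 0 := by simp [Li2]

theorem summable_one_div_succ_sq : Summable fun n : ℕ => 1 / ((n : ℝ) + 1) ^ 2 := by
  have := (summable_nat_add_iff 1).2 hasSum_zeta_two.summable
  simpa using this

theorem tsum_neg_one_pow_succ_div_sq :
    ∑' n : ℕ, 1 / ((n : ℝ) + 1) * ((-1) ^ (n + 1) / (n + 1)) = -(π ^ 2 / 12) := by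
  have h := hasSum_one_div_nat_pow_mul_cos (k := 1) one_ne_zero (x := 1 / 2) (by norm_num)
  rw [← hasSum_nat_add_iff' 1] at h
  rw [← h.tsum_eq.trans (?_ : _ = -(π ^ 2 / 12))]
  · refine tsum_congr fun n => ?_
    rw [show 2 * π * ((n + 1 : ℕ) : ℝ) * (1 / 2) = ((n + 1 : ℕ) : ℝ) * π by ring, cos_nat_mul_pi]
    push_cast
    field_simp
  · simp [Polynomial.bernoulli, Finset.sum_range_succ, bernoulli_eq_bernoulli'_of_ne_one]
    norm_num [bernoulli_one]
    ring

theorem Li2_neg_one : Li2 (-1) = -(π ^ 2 / 12) := by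
  let P : ℝ → ℝ := fun y => ∑' n : ℕ, 1 / ((n : ℝ) + 1) * (y ^ (n + 1) / (n + 1))
  have hP0 : P 0 = 0 := by simp [P]
  have hPc : ContinuousOn P (Icc (-1) 0) := by
    refine continuousOn_tsum (fun n => by fun_prop) summable_one_div_succ_sq fun n y hy => ?_
    have hy1 : |y| ≤ 1 := abs_le.2 ⟨hy.1, hy.2.trans zero_le_one⟩
    have hn : (0 : ℝ) < n + 1 := by positivity
    rw [norm_mul, norm_div, norm_div, norm_one, norm_pow, norm_of_nonneg hn.le, norm_eq_abs,
      div_mul_div_comm, one_mul, ← sq]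
    gcongr
    exact pow_le_one₀ (abs_nonneg y) hy1
  have hderiv : ∀ x ∈ Ioo (-1 : ℝ) 0, HasDerivAt P (-log (1 - x) / x) x := by
    intro x hx
    have hx1 : |x| < 1 := abs_lt.2 ⟨hx.1, hx.2.trans one_pos⟩
    have h := hasDerivAt_tsum_mul_pow_succ_div (k := id) (fun n => le_rfl)
      (d := fun n : ℕ => 1 / ((n : ℝ) + 1)) (fun n => by
        have hn : (0 : ℝ) < n + 1 := by positivity
        rw [abs_of_pos (by positivity), div_le_one hn]
        simp) hx1
    refine h.congr_deriv ?_
    rw [← (hasSum_pow_div_log_of_abs_lt_one hx1).tsum_eq, ← tsum_div_const]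
    refine tsum_congr fun n => ?_
    have := hx.2.ne
    simp only [id]
    field_simp
    ring
  have hc : ContinuousOn Li2 (Icc (-1) 0) := fun x hx =>
    (hasDerivAt_Li2_dslope (hx.2.trans_lt one_pos)).continuousAt.continuousWithinAt
  have h := eq_of_hasDerivAt_Ioo_eq (by norm_num) hc hPc
    (fun x hx => hasDerivAt_Li2 (hx.2.trans one_pos) hx.2.ne) hderiv
  rw [hP0, Li2_zero] at h
  rw [← tsum_neg_one_pow_succ_div_sq]
  simpa [P] using h

theorem poch_div_poch_add_one {a : ℝ} (ha : 0 < a) (n : ℕ) :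
    poch a n / poch (a + 1) n = a / (a + n) := by
  induction n with
  | zero => simp [poch, ha.ne']
  | succ n ih =>
    have h : a + n ≠ 0 := by positivity
    have h' : a + 1 + n ≠ 0 := by positivity
    have h'' : a + (n + 1 : ℝ) ≠ 0 := by positivity
    simp only [poch, Finset.prod_range_succ] at ih ⊢
    rw [mul_div_mul_comm, ih]
    push_cast
    field_simp
    ring

theorem poch_pos {a : ℝ} (ha : 0 < a) (n : ℕ) : 0 < poch a n :=
  Finset.prod_pos fun _ _ => by positivity

theorem poch_half_cube_div (n : ℕ) :
    poch (1 / 2) n ^ 3 / poch (3 / 2) n ^ 2 = poch (1 / 2) n / (2 * n + 1) ^ 2 := by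
  have h := poch_div_poch_add_one (a := 1 / 2) (by norm_num) n
  rw [show (1 / 2 + 1 : ℝ) = 3 / 2 by norm_num] at h
  rw [pow_succ', mul_div_assoc, ← div_pow, h]
  have : (2 * n + 1 : ℝ) ≠ 0 := by positivity
  have : (1 / 2 + n : ℝ) ≠ 0 := by positivity
  field_simp
  ring

theorem poch_le_factorial {a : ℝ} (ha0 : 0 ≤ a) (ha1 : a ≤ 1) (n : ℕ) : poch a n ≤ n.factorial := by
  rw [poch, ← Finset.prod_range_add_one_eq_factorial]
  push_cast
  refine Finset.prod_le_prod (fun _ _ => by positivity) fun i _ => by linarith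

theorem poch_div_factorial_eq_multichoose (a : ℝ) (n : ℕ) :
    poch a n / n.factorial = Ring.multichoose a n := by
  have h := Ring.factorial_nsmul_multichoose_eq_ascPochhammer a n
  have hp : (ascPochhammer ℕ n).smeval a = poch a n := by
    clear h
    induction n with
    | zero => simp [poch]
    | succ n ih =>
      rw [poch, Finset.prod_range_succ, ← poch, ← ih, ascPochhammer_succ_right,
        Polynomial.smeval_mul]
      simp [Polynomial.smeval_add, Polynomial.smeval_natCast]
  rw [hp, nsmul_eq_mul] at h
  rw [← h]
  field_simp

theorem hasSum_poch_div_factorial_mul_pow (a : ℝ) {x : ℝ} (hx : |x| < 1) :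
    HasSum (fun n : ℕ => poch a n / n.factorial * x ^ n) (1 / (1 - x) ^ a) := by
  have h := (Real.one_div_one_sub_rpow_hasFPowerSeriesOnBall_zero a).hasSum
    (y := x) (by simpa [← ofReal_norm] using hx)
  simpa [FormalMultilinearSeries.ofScalars, poch_div_factorial_eq_multichoose,
    Ring.multichoose_eq] using h

/-- The signed coefficients of the binomial series of `(1 + x) ^ (-1/2)`. -/
def invSqrtCoeff (n : ℕ) : ℝ := poch (1 / 2) n / n.factorial * (-1) ^ n

theorem abs_invSqrtCoeff_le_one (n : ℕ) : |invSqrtCoeff n| ≤ 1 := by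
  have hp := poch_pos (a := 1 / 2) (by norm_num) n
  rw [invSqrtCoeff, abs_mul, abs_neg_one_pow, mul_one, abs_of_pos (by positivity)]
  exact (div_le_one (by positivity)).2 (poch_le_factorial (by norm_num) (by norm_num) n)

theorem tsum_invSqrtCoeff_mul_pow {s : ℝ} (hs : |s| < 1) :
    ∑' n, invSqrtCoeff n * s ^ (2 * n) = (√(1 + s ^ 2))⁻¹ := by
  have hs' : |-(s ^ 2)| < 1 := by
    rw [abs_neg, abs_pow]
    exact pow_lt_one₀ (abs_nonneg s) hs two_ne_zero
  have h := (hasSum_poch_div_factorial_mul_pow (1 / 2) hs').tsum_eq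
  rw [sub_neg_eq_add, ← sqrt_eq_rpow] at h
  rw [← one_div, ← h]
  refine tsum_congr fun n => ?_
  rw [invSqrtCoeff, neg_pow (s ^ 2), pow_mul]
  ring

theorem tsum_invSqrtCoeff_mul_pow_div {s : ℝ} (hs0 : 0 ≤ s) (hs1 : s < 1) :
    ∑' n, invSqrtCoeff n * (s ^ (2 * n + 1) / ((2 * n : ℕ) + 1)) = arsinh s := by
  have hd : ∀ x, |x| < 1 → HasDerivAt
      (fun y => ∑' n, invSqrtCoeff n * (y ^ (2 * n + 1) / ((2 * n : ℕ) + 1)))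
      (√(1 + x ^ 2))⁻¹ x := fun x hx => by
    rw [← tsum_invSqrtCoeff_mul_pow hx]
    exact hasDerivAt_tsum_mul_pow_succ_div (fun n => by omega) abs_invSqrtCoeff_le_one hx
  have habs : ∀ x ∈ Icc 0 s, |x| < 1 := fun x hx =>
    abs_lt.2 ⟨by linarith [hx.1], hx.2.trans_lt hs1⟩
  have h := eq_of_hasDerivAt_Ioo_eq hs0
    (fun x hx => (hd x (habs x hx)).continuousAt.continuousWithinAt)
    continuous_arsinh.continuousOn
    (fun x hx => hd x (habs x (Ioo_subset_Icc_self hx))) (fun x _ => hasDerivAt_arsinh x)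
  simpa using h

/-- The power series of `∫₀ˢ arsinh t / t dt`. -/
def arsinhIntegralSeries (s : ℝ) : ℝ :=
  ∑' n : ℕ, invSqrtCoeff n / ((2 * n : ℕ) + 1) * (s ^ (2 * n + 1) / ((2 * n : ℕ) + 1))

theorem continuousOn_arsinhIntegralSeries : ContinuousOn arsinhIntegralSeries (Icc 0 1) := by
  refine continuousOn_tsum (fun n => by fun_prop) summable_one_div_succ_sq fun n s hs => ?_
  have hn : (0 : ℝ) < (2 * n : ℕ) + 1 := by positivity
  rw [norm_mul, norm_div, norm_div, norm_pow, norm_of_nonneg hn.le, norm_of_nonneg hs.1,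
    norm_eq_abs, div_mul_div_comm, ← sq]
  gcongr
  · exact mul_le_one₀ (abs_invSqrtCoeff_le_one n) (by have := hs.1; positivity)
      (pow_le_one₀ hs.1 hs.2)
  · omega

theorem hasDerivAt_arsinhIntegralSeries {s : ℝ} (hs0 : 0 < s) (hs1 : s < 1) :
    HasDerivAt arsinhIntegralSeries (arsinh s / s) s := by
  have h := hasDerivAt_tsum_mul_pow_succ_div (k := fun n => 2 * n) (fun n => by omega)
    (d := fun n => invSqrtCoeff n / ((2 * n : ℕ) + 1)) (fun n => by
      have hn : (0 : ℝ) < (2 * n : ℕ) + 1 := by positivity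
      rw [abs_div, abs_of_pos hn]
      refine div_le_one_of_le₀ ((abs_invSqrtCoeff_le_one n).trans ?_) (by positivity)
      have : (0 : ℝ) ≤ (2 * n : ℕ) := by positivity
      linarith) (abs_lt.2 ⟨by linarith, hs1⟩)
  refine h.congr_deriv ?_
  rw [← tsum_invSqrtCoeff_mul_pow_div hs0.le hs1, ← tsum_div_const]
  refine tsum_congr fun n => ?_
  rw [pow_succ]
  field_simp

/-- The closed form of `∫₀ˢ arsinh t / t dt` in terms of `w = exp (arsinh s)`. -/
def dilogPrimitive (w : ℝ) : ℝ :=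
  Li2 (-w) - Li2 (1 - w) - 1 / 2 * log w ^ 2 + log (w + 1) * log w + π ^ 2 / 12

theorem dilogPrimitive_one : dilogPrimitive 1 = 0 := by
  simp [dilogPrimitive, Li2_neg_one, Li2_zero]

theorem continuousAt_dilogPrimitive {w : ℝ} (hw : 0 < w) : ContinuousAt dilogPrimitive w := by
  have hc {x : ℝ} (hx : x < 1) : ContinuousAt Li2 x := (hasDerivAt_Li2_dslope hx).continuousAt
  have h1 : ContinuousAt (fun w => Li2 (-w)) w :=
    ContinuousAt.comp (f := fun w => -w) (hc (by linarith)) continuousAt_neg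
  have h2 : ContinuousAt (fun w => Li2 (1 - w)) w :=
    ContinuousAt.comp (f := fun w => 1 - w) (hc (by linarith)) (by fun_prop)
  have h3 : ContinuousAt log w := continuousAt_log hw.ne'
  have h4 : ContinuousAt (fun w => log (w + 1)) w :=
    ContinuousAt.log (by fun_prop) (by positivity)
  exact (((h1.sub h2).sub (continuousAt_const.mul (h3.pow 2))).add (h4.mul h3)).add
    continuousAt_const

theorem hasDerivAt_dilogPrimitive {w : ℝ} (hw : 1 < w) :
    HasDerivAt dilogPrimitive (log w * (w ^ 2 + 1) / (w * (w ^ 2 - 1))) w := by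
  have hw0 : 0 < w := one_pos.trans hw
  have hw1 : w - 1 ≠ 0 := sub_ne_zero.2 hw.ne'
  have hw2 : 1 - w ≠ 0 := sub_ne_zero.2 hw.ne
  have hw3 : w + 1 ≠ 0 := by positivity
  have hw4 : w ^ 2 - 1 ≠ 0 := by
    rw [show w ^ 2 - 1 = (w - 1) * (w + 1) by ring]
    exact mul_ne_zero hw1 hw3
  have h1 : HasDerivAt (fun w => Li2 (-w)) _ w :=
    (hasDerivAt_Li2 (by linarith) (neg_ne_zero.2 hw0.ne')).comp w (hasDerivAt_neg w)
  have h2 : HasDerivAt (fun w => Li2 (1 - w)) _ w :=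
    (hasDerivAt_Li2 (by linarith) hw2).comp w ((hasDerivAt_id w).const_sub 1)
  have h3 := hasDerivAt_log hw0.ne'
  have h4 : HasDerivAt (fun w => log (w + 1)) _ w := ((hasDerivAt_id w).add_const 1).log hw3
  have h := (((h1.sub h2).sub ((h3.pow 2).const_mul (1 / 2))).add (h4.mul h3)).add_const
    (π ^ 2 / 12)
  refine h.congr_deriv ?_
  rw [show 1 - -w = w + 1 by ring, show 1 - (1 - w) = w by ring]
  simp only [id]
  rw [show 1 - w = -(w - 1) by ring, show w ^ 2 - 1 = (w - 1) * (w + 1) by ring]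
  field_simp
  ring

theorem hasDerivAt_dilogPrimitive_exp_arsinh {s : ℝ} (hs : 0 < s) :
    HasDerivAt (fun s => dilogPrimitive (exp (arsinh s))) (arsinh s / s) s := by
  have hw : 1 < exp (arsinh s) := one_lt_exp_iff.2 (arsinh_pos_iff.2 hs)
  have h := (hasDerivAt_dilogPrimitive hw).comp s (hasDerivAt_arsinh s).exp
  refine h.congr_deriv ?_
  have hr : 0 < √(1 + s ^ 2) := by positivity
  have hr2 : √(1 + s ^ 2) ^ 2 = 1 + s ^ 2 := sq_sqrt (by positivity)
  rw [log_exp, exp_arsinh]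
  set r := √(1 + s ^ 2)
  rw [show (s + r) ^ 2 - 1 = 2 * s * (s + r) by linear_combination hr2,
    show (s + r) ^ 2 + 1 = 2 * r * (s + r) by linear_combination -hr2]
  field_simp

theorem arsinhIntegralSeries_eq {s : ℝ} (hs0 : 0 ≤ s) (hs1 : s ≤ 1) :
    arsinhIntegralSeries s = dilogPrimitive (exp (arsinh s)) := by
  have h := eq_of_hasDerivAt_Ioo_eq hs0
    (continuousOn_arsinhIntegralSeries.mono (Icc_subset_Icc_right hs1))
    (g := fun s => dilogPrimitive (exp (arsinh s)))
    (fun x _ => (ContinuousAt.comp (f := fun s => exp (arsinh s))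
      (continuousAt_dilogPrimitive (exp_pos _))
      (continuous_exp.comp continuous_arsinh).continuousAt).continuousWithinAt)
    (fun x hx => hasDerivAt_arsinhIntegralSeries hx.1 (hx.2.trans_le hs1))
    (fun x hx => hasDerivAt_dilogPrimitive_exp_arsinh hx.1)
  simpa [arsinhIntegralSeries, dilogPrimitive_one] using h

theorem sqrt_mul_tsum_eq_arsinhIntegralSeries {z : ℝ} (hz : 0 ≤ z) :
    √z * ∑' n : ℕ, poch (1 / 2) n ^ 3 / poch (3 / 2) n ^ 2 * (-z) ^ n / n.factorial =
      arsinhIntegralSeries √z := by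
  rw [arsinhIntegralSeries, ← tsum_mul_left]
  refine tsum_congr fun n => ?_
  rw [poch_half_cube_div, invSqrtCoeff, pow_succ √z, pow_mul, sq_sqrt hz, neg_pow]
  push_cast
  field_simp

end

theorem threeF2_half_polylog (z : ℝ) (hz0 : 0 ≤ z) (hz1 : z ≤ 1) :
    Real.sqrt z * ∑' n : ℕ,
        (poch (1/2) n)^3 / ((poch (3/2) n)^2) * (-z) ^ n / (Nat.factorial n) =
      Li2 (-Real.sqrt z - Real.sqrt (z + 1))
        - Li2 (1 - Real.sqrt z - Real.sqrt (z + 1))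
        - (1/2) * (Real.log (Real.sqrt z + Real.sqrt (z + 1)))^2
        + Real.log (Real.sqrt z + Real.sqrt (z + 1) + 1)
            * Real.log (Real.sqrt z + Real.sqrt (z + 1))
        + Real.pi^2 / 12 := by
  rw [sqrt_mul_tsum_eq_arsinhIntegralSeries hz0,
    arsinhIntegralSeries_eq (Real.sqrt_nonneg z) (Real.sqrt_le_one.2 hz1), Real.exp_arsinh,
    Real.sq_sqrt hz0, add_comm 1 z, dilogPrimitive, neg_add', sub_add_eq_sub_sub]
end

section
/- ₃F₂(1/2, 1/2−a, a+1/2; 1−a, a+1; 1) = π² a csc(πa) / (Γ(3/4)² Γ(3/4−a) Γ(a+3/4)) for every real a with 0 < a < 1/4. -/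
open Filter Topology

theorem poch_succ (x : ℝ) (n : ℕ) : poch x (n + 1) = poch x n * (x + n) := by
  simp [poch, Finset.prod_range_succ]

theorem poch_pos_s9 {x : ℝ} (hx : 0 < x) (n : ℕ) : 0 < poch x n :=
  Finset.prod_pos fun i _ => by positivity

theorem mul_poch_add_one (x : ℝ) (n : ℕ) : x * poch (x + 1) n = poch x n * (x + n) := by
  induction n with
  | zero => simp [poch]
  | succ n ih =>
    rw [poch_succ, poch_succ, ← mul_assoc, ih]
    push_cast
    ring

theorem poch_add_two {x : ℝ} (hx : 0 < x) (n : ℕ) :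
    poch (x + 2) n = poch x n * (x + n) * (x + n + 1) / (x * (x + 1)) := by
  have h₁ := mul_poch_add_one x n
  have h₂ := mul_poch_add_one (x + 1) n
  rw [show x + 1 + 1 = x + 2 by ring] at h₂
  rw [eq_div_iff (by positivity)]
  linear_combination x * h₂ + (x + 1 + n) * h₁

/-- The `n`-th term of the well-poised series
`₃F₂(x, 1/2 - a, 1/2 + a; x + 1/2 + a, x + 1/2 - a; 1)`. -/
noncomputable def wellPoisedTerm (x a : ℝ) (n : ℕ) : ℝ :=
  poch x n * poch (1/2 - a) n * poch (1/2 + a) n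
    / (poch (x + 1/2 - a) n * poch (x + 1/2 + a) n * n.factorial)

/-- The ratio of the values of the well-poised series at `x` and at `x + 2`. -/
noncomputable def wellPoisedRatio (x a : ℝ) : ℝ :=
  (x + 1) ^ 2 * (x + 1 + 2 * a) * (x + 1 - 2 * a)
    / ((x + 1/2 + a) * (x + 3/2 + a) * (x + 1/2 - a) * (x + 3/2 - a))

section

variable {x a : ℝ}

theorem wellPoisedTerm_zero : wellPoisedTerm x a 0 = 1 := by
  simp [wellPoisedTerm, poch]

theorem wellPoisedTerm_pos (hx : 1/2 ≤ x) (ha0 : 0 < a) (ha1 : a < 1/2) (n : ℕ) :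
    0 < wellPoisedTerm x a n := by
  have h₁ := poch_pos_s9 (x := x) (by linarith) n
  have h₂ := poch_pos_s9 (x := 1/2 - a) (by linarith) n
  have h₃ := poch_pos_s9 (x := 1/2 + a) (by linarith) n
  have h₄ := poch_pos_s9 (x := x + 1/2 - a) (by linarith) n
  have h₅ := poch_pos_s9 (x := x + 1/2 + a) (by linarith) n
  unfold wellPoisedTerm
  positivity

theorem wellPoisedTerm_succ (n : ℕ) :
    wellPoisedTerm x a (n + 1) = wellPoisedTerm x a n *
      ((x + n) * (1/2 - a + n) * (1/2 + a + n)
        / ((x + 1/2 - a + n) * (x + 1/2 + a + n) * (n + 1))) := by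
  simp only [wellPoisedTerm, poch_succ, Nat.factorial_succ]
  push_cast
  rw [div_mul_div_comm]
  congr 1 <;> ring

theorem wellPoisedRatio_mul_wellPoisedTerm_add_two
    (hx : 1/2 ≤ x) (ha0 : 0 < a) (ha1 : a < 1/2) (n : ℕ) :
    wellPoisedRatio x a * wellPoisedTerm (x + 2) a n = wellPoisedTerm x a n *
      ((x + 1) * (x + 1 + 2 * a) * (x + 1 - 2 * a) * (x + n) * (x + n + 1) /
        (x * ((x + 1/2 - a + n) * (x + 3/2 - a + n) * (x + 1/2 + a + n) * (x + 3/2 + a + n)))) := by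
  have hn : (0 : ℝ) ≤ n := n.cast_nonneg
  have h₁ := poch_pos_s9 (x := x) (by linarith) n
  have h₄ := poch_pos_s9 (x := x + 1/2 - a) (by linarith) n
  have h₅ := poch_pos_s9 (x := x + 1/2 + a) (by linarith) n
  have hf : (0 : ℝ) < n.factorial := by positivity
  have e₁ : x + 2 + 1/2 - a = x + 1/2 - a + 2 := by ring
  have e₂ : x + 2 + 1/2 + a = x + 1/2 + a + 2 := by ring
  have p₀ : 0 < x := by linarith
  have p₁ : 0 < x + 1/2 - a := by linarith
  have p₂ : 0 < x + 1/2 + a := by linarith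
  have q₁ : 0 < x + 1/2 - a + n := by linarith
  have q₂ : 0 < x + 1/2 + a + n := by linarith
  have q₃ : 0 < x + 3/2 - a := by linarith
  have q₄ : 0 < x + 3/2 + a := by linarith
  have q₅ : 0 < x + 3/2 - a + n := by linarith
  have q₆ : 0 < x + 3/2 + a + n := by linarith
  unfold wellPoisedRatio wellPoisedTerm
  rw [e₁, e₂, poch_add_two p₀, poch_add_two p₁, poch_add_two p₂,
    show x + 1/2 - a + 1 = x + 3/2 - a by ring, show x + 1/2 + a + 1 = x + 3/2 + a by ring,
    show x + 1/2 - a + n + 1 = x + 3/2 - a + n by ring,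
    show x + 1/2 + a + n + 1 = x + 3/2 + a + n by ring]
  generalize x + 1/2 - a + (n : ℝ) = r₁ at *
  generalize x + 1/2 + a + (n : ℝ) = r₂ at *
  generalize x + 3/2 - a + (n : ℝ) = r₃ at *
  generalize x + 3/2 + a + (n : ℝ) = r₄ at *
  generalize poch (x + 1/2 - a) n = P at *
  generalize poch (x + 1/2 + a) n = Q at *
  generalize x + 1/2 - a = s₁ at *
  generalize x + 1/2 + a = s₂ at *
  generalize x + 3/2 - a = s₃ at *
  generalize x + 3/2 + a = s₄ at *
  field_simp

/-- The Wilf–Zeilberger telescoping of the well-poised series. -/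
theorem sum_wellPoisedTerm_sub (hx : 1/2 ≤ x) (ha0 : 0 < a) (ha1 : a < 1/2) (N : ℕ) :
    ∑ n ∈ Finset.range N,
        (wellPoisedTerm x a n - wellPoisedRatio x a * wellPoisedTerm (x + 2) a n) =
      -(N * wellPoisedTerm x a N *
        (((x + N) ^ 2 + (x + 1) * (x + N) - (1/4 - a ^ 2))
          / (x * ((x + 1/2 - a + N) * (x + 1/2 + a + N))))) := by
  induction N with
  | zero => simp
  | succ n ih =>
    have hn : (0 : ℝ) ≤ n := n.cast_nonneg
    have p₀ : 0 < x := by linarith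
    have q₁ : 0 < x + 1/2 - a + n := by linarith
    have q₂ : 0 < x + 1/2 + a + n := by linarith
    have q₅ : 0 < x + 3/2 - a + n := by linarith
    have q₆ : 0 < x + 3/2 + a + n := by linarith
    rw [Finset.sum_range_succ, ih, wellPoisedRatio_mul_wellPoisedTerm_add_two hx ha0 ha1,
      wellPoisedTerm_succ]
    push_cast
    rw [show x + 1/2 - a + (n + 1 : ℝ) = x + 3/2 - a + n by ring,
      show x + 1/2 + a + (n + 1 : ℝ) = x + 3/2 + a + n by ring]
    generalize wellPoisedTerm x a n = t
    obtain ⟨r₁, h₁⟩ : ∃ r, r = x + 1/2 - a + (n : ℝ) := ⟨_, rfl⟩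
    obtain ⟨r₂, h₂⟩ : ∃ r, r = x + 1/2 + a + (n : ℝ) := ⟨_, rfl⟩
    obtain ⟨r₃, h₃⟩ : ∃ r, r = x + 3/2 - a + (n : ℝ) := ⟨_, rfl⟩
    obtain ⟨r₄, h₄⟩ : ∃ r, r = x + 3/2 + a + (n : ℝ) := ⟨_, rfl⟩
    rw [← h₁] at q₁ ⊢
    rw [← h₂] at q₂ ⊢
    rw [← h₃] at q₅ ⊢
    rw [← h₄] at q₆ ⊢
    field_simp
    subst h₁ h₂ h₃ h₄
    ring

theorem wellPoisedTerm_step_le (hx : 1/2 ≤ x) (ha0 : 0 < a) (ha1 : a < 1/2) (n : ℕ) :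
    (x + n) * (1/2 - a + n) * (1/2 + a + n)
        / ((x + 1/2 - a + n) * (x + 1/2 + a + n) * (n + 1)) ≤
      ((2 * n + 1) / (2 * n + 2)) ^ 3 := by
  have hn : (0 : ℝ) ≤ n := n.cast_nonneg
  generalize (n : ℝ) = m at *
  have q₁ : 0 < x + 1/2 - a + m := by linarith
  have q₂ : 0 < x + 1/2 + a + m := by linarith
  have hq0 : 0 < 1/4 - a ^ 2 := by nlinarith
  have h₁ : (x + m) / ((x + 1/2 - a + m) * (x + 1/2 + a + m)) ≤
      (m + 1/2) / ((m + 1) ^ 2 - a ^ 2) := by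
    rw [div_le_div_iff₀ (by positivity) (by nlinarith)]
    have : 0 ≤ (x - 1/2) * ((x + m) * (m + 1/2) - (1/4 - a ^ 2)) := by
      apply mul_nonneg <;> nlinarith
    nlinarith
  have h₂ : (1/2 - a + m) * (1/2 + a + m) / ((m + 1) ^ 2 - a ^ 2) ≤
      (m + 1/2) ^ 2 / (m + 1) ^ 2 := by
    rw [div_le_div_iff₀ (by nlinarith) (by positivity)]
    nlinarith [mul_nonneg (sq_nonneg a) (show (0 : ℝ) ≤ 2 * (m + 1/2) + 1/4 by linarith),
      sq_nonneg a]
  have hd : 0 < (m + 1) ^ 2 - a ^ 2 := by nlinarith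
  calc _ = (x + m) / ((x + 1/2 - a + m) * (x + 1/2 + a + m)) *
        ((1/2 - a + m) * (1/2 + a + m) / (m + 1)) := by
        rw [div_mul_div_comm]; congr 1; ring
    _ ≤ (m + 1/2) / ((m + 1) ^ 2 - a ^ 2) * ((1/2 - a + m) * (1/2 + a + m) / (m + 1)) := by
        refine mul_le_mul_of_nonneg_right h₁ (div_nonneg (mul_nonneg ?_ ?_) ?_) <;> linarith
    _ = (1/2 - a + m) * (1/2 + a + m) / ((m + 1) ^ 2 - a ^ 2) * ((m + 1/2) / (m + 1)) := by
        field_simp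
    _ ≤ (m + 1/2) ^ 2 / (m + 1) ^ 2 * ((m + 1/2) / (m + 1)) := by gcongr
    _ = _ := by
        rw [show 2 * m + 1 = 2 * (m + 1/2) by ring, show 2 * m + 2 = 2 * (m + 1) by ring]
        field_simp

theorem wellPoisedTerm_antitone (hx : 1/2 ≤ x) (ha0 : 0 < a) (ha1 : a < 1/2) :
    Antitone (wellPoisedTerm x a) := by
  refine antitone_nat_of_succ_le fun n => ?_
  rw [wellPoisedTerm_succ]
  refine mul_le_of_le_one_right (wellPoisedTerm_pos hx ha0 ha1 n).le
    ((wellPoisedTerm_step_le hx ha0 ha1 n).trans (pow_le_one₀ (by positivity) ?_))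
  rw [div_le_one (by positivity)]
  linarith

theorem wellPoisedTerm_sq_mul_le (hx : 1/2 ≤ x) (ha0 : 0 < a) (ha1 : a < 1/2) (n : ℕ) :
    wellPoisedTerm x a n ^ 2 * (2 * n + 1) ^ 3 ≤ 1 := by
  induction n with
  | zero => simp [wellPoisedTerm_zero]
  | succ n ih =>
    refine le_trans ?_ ih
    have ht := wellPoisedTerm_pos hx ha0 ha1 n
    have hs : wellPoisedTerm x a (n + 1) ≤
        wellPoisedTerm x a n * ((2 * n + 1) / (2 * n + 2)) ^ 3 := by
      rw [wellPoisedTerm_succ]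
      exact mul_le_mul_of_nonneg_left (wellPoisedTerm_step_le hx ha0 ha1 n) ht.le
    have hr : ((2 * n + 1) / (2 * n + 2) : ℝ) ^ 2 * (2 * n + 3) ≤ 2 * n + 1 := by
      rw [div_pow, div_mul_eq_mul_div, div_le_iff₀ (by positivity)]
      nlinarith [n.cast_nonneg (α := ℝ)]
    calc wellPoisedTerm x a (n + 1) ^ 2 * (2 * (n + 1 : ℕ) + 1) ^ 3
        ≤ (wellPoisedTerm x a n * ((2 * n + 1) / (2 * n + 2)) ^ 3) ^ 2 *
          (2 * (n + 1 : ℕ) + 1) ^ 3 := by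
          gcongr
          exact (wellPoisedTerm_pos hx ha0 ha1 _).le
      _ = wellPoisedTerm x a n ^ 2 * (((2 * n + 1) / (2 * n + 2)) ^ 2 * (2 * n + 3)) ^ 3 := by
          push_cast
          ring
      _ ≤ wellPoisedTerm x a n ^ 2 * (2 * n + 1) ^ 3 := by gcongr

theorem wellPoisedTerm_le_rpow (hx : 1/2 ≤ x) (ha0 : 0 < a) (ha1 : a < 1/2) (n : ℕ) :
    wellPoisedTerm x a n ≤ 1 / ((n + 1 : ℕ) : ℝ) ^ (3/2 : ℝ) := by
  have hp : (0 : ℝ) < (n + 1 : ℕ) := by positivity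
  have ht := wellPoisedTerm_pos hx ha0 ha1 n
  rw [le_div_iff₀ (by positivity)]
  refine (sq_le_one_iff₀ (by positivity)).1 ?_
  rw [mul_pow, ← Real.rpow_natCast (_ ^ (3/2 : ℝ)), ← Real.rpow_mul hp.le,
    show (3/2 : ℝ) * (2 : ℕ) = (3 : ℕ) by norm_num, Real.rpow_natCast]
  refine le_trans ?_ (wellPoisedTerm_sq_mul_le hx ha0 ha1 n)
  gcongr
  push_cast
  linarith [n.cast_nonneg (α := ℝ)]

theorem summable_one_div_succ_rpow :
    Summable fun n : ℕ => 1 / ((n + 1 : ℕ) : ℝ) ^ (3/2 : ℝ) :=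
  (summable_nat_add_iff (f := fun n : ℕ => 1 / (n : ℝ) ^ (3/2 : ℝ)) 1).2
    (Real.summable_one_div_nat_rpow.2 (by norm_num))

theorem summable_wellPoisedTerm (hx : 1/2 ≤ x) (ha0 : 0 < a) (ha1 : a < 1/2) :
    Summable (wellPoisedTerm x a) :=
  summable_one_div_succ_rpow.of_nonneg_of_le (fun n => (wellPoisedTerm_pos hx ha0 ha1 n).le)
    (wellPoisedTerm_le_rpow hx ha0 ha1)

theorem tendsto_mul_wellPoisedTerm (hx : 1/2 ≤ x) (ha0 : 0 < a) (ha1 : a < 1/2) :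
    Tendsto (fun n : ℕ => n * wellPoisedTerm x a n) atTop (𝓝 0) := by
  have h : Tendsto (fun n : ℕ => ((n + 1 : ℕ) : ℝ) ^ (-(1/2) : ℝ)) atTop (𝓝 0) :=
    ((tendsto_rpow_neg_atTop (by norm_num : (0 : ℝ) < 1/2)).comp
      tendsto_natCast_atTop_atTop).comp (tendsto_add_atTop_nat 1)
  refine squeeze_zero
    (fun n => mul_nonneg n.cast_nonneg (wellPoisedTerm_pos hx ha0 ha1 n).le) (fun n => ?_) h
  have hp : (0 : ℝ) < (n + 1 : ℕ) := by positivity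
  calc n * wellPoisedTerm x a n
      ≤ (n + 1 : ℕ) * (1 / ((n + 1 : ℕ) : ℝ) ^ (3/2 : ℝ)) := by
        have := (wellPoisedTerm_pos hx ha0 ha1 n).le
        gcongr
        · simp
        · exact wellPoisedTerm_le_rpow hx ha0 ha1 n
    _ = _ := by
        rw [mul_one_div, div_eq_iff (by positivity), ← Real.rpow_add hp]
        norm_num

theorem tsum_wellPoisedTerm_eq_ratio_mul (hx : 1/2 ≤ x) (ha0 : 0 < a) (ha1 : a < 1/2) :
    ∑' n, wellPoisedTerm x a n =
      wellPoisedRatio x a * ∑' n, wellPoisedTerm (x + 2) a n := by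
  have s₁ := summable_wellPoisedTerm hx ha0 ha1
  have s₂ := (summable_wellPoisedTerm (x := x + 2) (by linarith) ha0 ha1).mul_left
    (wellPoisedRatio x a)
  have hS := (s₁.sub s₂).hasSum.tendsto_sum_nat
  rw [s₁.tsum_sub s₂, tsum_mul_left] at hS
  refine sub_eq_zero.1 (tendsto_nhds_unique hS ?_)
  have h := (tendsto_mul_wellPoisedTerm hx ha0 ha1).mul_const ((x + 1) / x)
  rw [zero_mul] at h
  refine squeeze_zero_norm (fun N => ?_) h
  have hN : (0 : ℝ) ≤ N := N.cast_nonneg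
  have hq0 : 0 < 1/4 - a ^ 2 := by nlinarith
  have q₁ : 0 < x + 1/2 - a + N := by linarith
  have q₂ : 0 < x + 1/2 + a + N := by linarith
  have hx0 : 0 < x := by linarith
  have ht := (wellPoisedTerm_pos hx ha0 ha1 N).le
  have hnum : 0 ≤ (x + N) ^ 2 + (x + 1) * (x + N) - (1/4 - a ^ 2) := by nlinarith
  rw [sum_wellPoisedTerm_sub hx ha0 ha1, norm_neg, Real.norm_of_nonneg (by positivity)]
  refine mul_le_mul_of_nonneg_left ?_ (by positivity)
  rw [div_le_div_iff₀ (by positivity) hx0]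
  have : 0 ≤ x * (x * (x + N) ^ 2 + (x + 2) * (1/4 - a ^ 2)) := by positivity
  nlinarith

theorem tsum_wellPoisedTerm_eq_prod_mul (ha0 : 0 < a) (ha1 : a < 1/2) (k : ℕ) :
    ∑' n, wellPoisedTerm (1/2) a n =
      (∏ j ∈ Finset.range k, wellPoisedRatio (1/2 + 2 * j) a) *
        ∑' n, wellPoisedTerm (1/2 + 2 * k) a n := by
  induction k with
  | zero => simp
  | succ k ih =>
    have hk : (0 : ℝ) ≤ k := k.cast_nonneg
    rw [ih, tsum_wellPoisedTerm_eq_ratio_mul (by linarith) ha0 ha1, Finset.prod_range_succ,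
      mul_assoc]
    push_cast
    ring_nf

theorem tendsto_tsum_wellPoisedTerm (ha0 : 0 < a) (ha1 : a < 1/2) :
    Tendsto (fun k : ℕ => ∑' n, wellPoisedTerm (1/2 + 2 * k) a n) atTop (𝓝 1) := by
  have hx (k : ℕ) : (1/2 : ℝ) ≤ 1/2 + 2 * k := by linarith [k.cast_nonneg (α := ℝ)]
  suffices h : Tendsto (fun k : ℕ => ∑' n, wellPoisedTerm (1/2 + 2 * k) a n) atTop
      (𝓝 (∑' n : ℕ, if n = 0 then 1 else 0)) by
    rwa [tsum_ite_eq (0 : ℕ) (fun _ => (1 : ℝ))] at h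
  refine tendsto_tsum_of_dominated_convergence summable_one_div_succ_rpow (fun n => ?_)
    (Eventually.of_forall fun k n => ?_)
  · rcases n with _ | n
    · simp [wellPoisedTerm_zero]
    · have hlim : Tendsto (fun k : ℕ => 1 / ((k : ℝ) + 1)) atTop (𝓝 0) :=
        tendsto_one_div_add_atTop_nhds_zero_nat
      simp only [Nat.add_eq_zero_iff, one_ne_zero, and_false, if_false]
      refine squeeze_zero (fun k => (wellPoisedTerm_pos (hx k) ha0 ha1 _).le) (fun k => ?_) hlim
      refine (wellPoisedTerm_antitone (hx k) ha0 ha1 (Nat.le_add_left 1 n)).trans ?_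
      have hk : (0 : ℝ) ≤ k := k.cast_nonneg
      refine (wellPoisedTerm_succ 0).trans_le ?_
      rw [wellPoisedTerm_zero, one_mul, Nat.cast_zero]
      have hq0 : 0 < 1/4 - a ^ 2 := by nlinarith
      have hd : 0 < (1/2 + 2 * (k : ℝ) + 1/2 - a + 0) * (1/2 + 2 * k + 1/2 + a + 0) * (0 + 1) :=
        mul_pos (mul_pos (by linarith) (by linarith)) (by norm_num)
      rw [div_le_div_iff₀ hd (by positivity)]
      nlinarith [mul_nonneg hk (sq_nonneg a), mul_nonneg hk hk,
        mul_nonneg (mul_nonneg hk hk) (sq_nonneg a)]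
  · rw [Real.norm_of_nonneg (wellPoisedTerm_pos (hx k) ha0 ha1 n).le]
    exact wellPoisedTerm_le_rpow (hx k) ha0 ha1 n

theorem prod_wellPoisedRatio_eq_GammaSeq (ha0 : 0 < a) (ha1 : a < 1/2) {n : ℕ} (hn : 0 < n) :
    ∏ j ∈ Finset.range (n + 1), wellPoisedRatio (1/2 + 2 * j) a =
      Real.GammaSeq (1/2 + a/2) n * Real.GammaSeq (1/2 - a/2) n *
          (Real.GammaSeq (1 + a/2) n * Real.GammaSeq (1 - a/2) n) /
        (Real.GammaSeq (3/4) n ^ 2 * Real.GammaSeq (3/4 - a) n * Real.GammaSeq (a + 3/4) n) := by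
  have hr (j : ℕ) : wellPoisedRatio (1/2 + 2 * j) a =
      (3/4 + j) ^ 2 * (3/4 - a + j) * (a + 3/4 + j) /
        ((1/2 + a/2 + j) * (1/2 - a/2 + j) * ((1 + a/2 + j) * (1 - a/2 + j))) := by
    unfold wellPoisedRatio
    rw [← mul_div_mul_left _ _ (show (1/16 : ℝ) ≠ 0 by norm_num)]
    congr 1 <;> ring
  have hpos {s : ℝ} (hs : 0 < s) : 0 < ∏ j ∈ Finset.range (n + 1), (s + j) := poch_pos_s9 hs _
  have h₁ := hpos (s := 1/2 + a/2) (by linarith)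
  have h₂ := hpos (s := 1/2 - a/2) (by linarith)
  have h₃ := hpos (s := 1 + a/2) (by linarith)
  have h₄ := hpos (s := 1 - a/2) (by linarith)
  have h₅ := hpos (s := 3/4) (by linarith)
  have h₆ := hpos (s := 3/4 - a) (by linarith)
  have h₇ := hpos (s := a + 3/4) (by linarith)
  have hn' : (0 : ℝ) < n := by exact_mod_cast hn
  have hf : (0 : ℝ) < n.factorial := by positivity
  have hpow : (n : ℝ) ^ (1/2 + a/2) * (n : ℝ) ^ (1/2 - a/2) *
      ((n : ℝ) ^ (1 + a/2) * (n : ℝ) ^ (1 - a/2)) =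
      ((n : ℝ) ^ (3/4 : ℝ)) ^ 2 * (n : ℝ) ^ (3/4 - a) * (n : ℝ) ^ (a + 3/4) := by
    simp only [sq, ← Real.rpow_add hn']
    congr 1
    ring
  have w₅ := Real.rpow_pos_of_pos hn' (3/4)
  have w₆ := Real.rpow_pos_of_pos hn' (3/4 - a)
  have w₇ := Real.rpow_pos_of_pos hn' (a + 3/4)
  simp only [hr, Finset.prod_div_distrib, Finset.prod_mul_distrib, Finset.prod_pow,
    Real.GammaSeq]
  generalize ∏ j ∈ Finset.range (n + 1), (1/2 + a/2 + (j : ℝ)) = P₁ at *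
  generalize ∏ j ∈ Finset.range (n + 1), (1/2 - a/2 + (j : ℝ)) = P₂ at *
  generalize ∏ j ∈ Finset.range (n + 1), (1 + a/2 + (j : ℝ)) = P₃ at *
  generalize ∏ j ∈ Finset.range (n + 1), (1 - a/2 + (j : ℝ)) = P₄ at *
  generalize ∏ j ∈ Finset.range (n + 1), ((3/4 : ℝ) + (j : ℝ)) = P₅ at *
  generalize ∏ j ∈ Finset.range (n + 1), (3/4 - a + (j : ℝ)) = P₆ at *
  generalize ∏ j ∈ Finset.range (n + 1), (a + 3/4 + (j : ℝ)) = P₇ at *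
  generalize (n : ℝ) ^ (1/2 + a/2) = W₁ at *
  generalize (n : ℝ) ^ (1/2 - a/2) = W₂ at *
  generalize (n : ℝ) ^ (1 + a/2) = W₃ at *
  generalize (n : ℝ) ^ (1 - a/2) = W₄ at *
  generalize (n : ℝ) ^ (3/4 : ℝ) = W₅ at *
  generalize (n : ℝ) ^ (3/4 - a) = W₆ at *
  generalize (n : ℝ) ^ (a + 3/4) = W₇ at *
  field_simp
  linear_combination -hpow

theorem Gamma_mul_Gamma_mul_Gamma_mul_Gamma (ha0 : 0 < a) (ha1 : a < 1) :
    Real.Gamma (1/2 + a/2) * Real.Gamma (1/2 - a/2) *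
        (Real.Gamma (1 + a/2) * Real.Gamma (1 - a/2)) =
      Real.pi ^ 2 * a * (1 / Real.sin (Real.pi * a)) := by
  have h₁ := Real.Gamma_mul_Gamma_one_sub (1/2 + a/2)
  have h₂ := Real.Gamma_mul_Gamma_one_sub (a/2)
  rw [show 1 - (1/2 + a/2) = 1/2 - a/2 by ring,
    show Real.pi * (1/2 + a/2) = Real.pi * a / 2 + Real.pi / 2 by ring,
    Real.sin_add_pi_div_two] at h₁
  rw [show Real.pi * (a/2) = Real.pi * a / 2 by ring] at h₂
  rw [add_comm 1 (a/2), Real.Gamma_add_one (by positivity), h₁, mul_assoc (a/2), h₂,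
    show Real.pi * a = 2 * (Real.pi * a / 2) by ring, Real.sin_two_mul]
  have hpi := Real.pi_pos
  have hs : 0 < Real.sin (Real.pi * a / 2) :=
    Real.sin_pos_of_pos_of_lt_pi (by positivity) (by nlinarith)
  have hc : 0 < Real.cos (Real.pi * a / 2) :=
    Real.cos_pos_of_mem_Ioo ⟨by nlinarith, by nlinarith⟩
  rw [show 2 * (Real.pi * a / 2) / 2 = Real.pi * a / 2 by ring]
  field_simp

theorem tsum_wellPoisedTerm_one_half (ha0 : 0 < a) (ha1 : a < 1/2) :
    ∑' n, wellPoisedTerm (1/2) a n =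
      Real.pi ^ 2 * a * (1 / Real.sin (Real.pi * a))
        / (Real.Gamma (3/4) ^ 2 * Real.Gamma (3/4 - a) * Real.Gamma (a + 3/4)) := by
  have h₅ := Real.Gamma_pos_of_pos (show (0 : ℝ) < 3/4 by norm_num)
  have h₆ := Real.Gamma_pos_of_pos (show 0 < 3/4 - a by linarith)
  have h₇ := Real.Gamma_pos_of_pos (show 0 < a + 3/4 by linarith)
  have hG := Real.GammaSeq_tendsto_Gamma
  have hlim := ((((hG (1/2 + a/2)).mul (hG (1/2 - a/2))).mul
    ((hG (1 + a/2)).mul (hG (1 - a/2)))).div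
    ((((hG (3/4)).pow 2).mul (hG (3/4 - a))).mul (hG (a + 3/4))) (by positivity)).mul
    ((tendsto_tsum_wellPoisedTerm ha0 ha1).comp (tendsto_add_atTop_nat 1))
  rw [mul_one, Gamma_mul_Gamma_mul_Gamma_mul_Gamma ha0 (by linarith)] at hlim
  refine tendsto_nhds_unique (tendsto_const_nhds.congr' ?_) hlim
  filter_upwards [eventually_gt_atTop 0] with n hn
  rw [tsum_wellPoisedTerm_eq_prod_mul ha0 ha1 (n + 1),
    prod_wellPoisedRatio_eq_GammaSeq ha0 ha1 hn]
  rfl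

end

theorem threeF2_K3_value (a : ℝ) (ha0 : 0 < a) (ha1 : a < 1/4) :
    ∑' n : ℕ,
        poch (1/2) n * poch (1/2 - a) n * poch (a + 1/2) n
          / (poch (1 - a) n * poch (a + 1) n * (Nat.factorial n)) =
      Real.pi^2 * a * (1 / Real.sin (Real.pi * a))
        / ((Real.Gamma (3/4))^2 * Real.Gamma (3/4 - a) * Real.Gamma (a + 3/4)) := by
  rw [← tsum_wellPoisedTerm_one_half ha0 (by linarith)]
  refine tsum_congr fun n => ?_
  rw [wellPoisedTerm, add_comm a (1/2), show (1/2 : ℝ) + 1/2 - a = 1 - a by ring,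
    show (1/2 : ℝ) + 1/2 + a = a + 1 by ring]
end
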